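/- arXiv:1907.08163 — 5 statements merged into one kernel-verified Lean document; each statement's English description precedes it below -/
import Mathlib

section
/- Let Λ be a finite nonempty set and let M be a measurable space of measurements with a function f : Λ × M → [0,1] that is measurable in its second argument. A preparation is a probability distribution q : Λ → [0,1] with Σ_λ q(λ) = 1, and it induces the function g_q : M → [0,1], g_q(E) = Σ_{λ∈Λ} q(λ)·f(λ,E). Then there exists a universal constant K > 0 such that the following holds. Let D be a probability measure on M, p a preparation (the target), ε, δ ∈ (0,1), and γ > η > 0. If m ≥ (K/ε)·( (log₂|Λ|/(γ−η)²)·log²( log₂|Λ| / ((γ−η)·ε) ) + log(1/δ) ), then with probability at least 1 − δ over E₁,…,E_m drawn i.i.d. from D, every preparation q satisfying |g_q(E_i) − g_p(E_i)| ≤ η for all i ∈ {1,…,m} also satisfies Pr_{E∼D}[ |g_q(E) − g_p(E)| > γ ] ≤ ε. -/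
open MeasureTheory

/-- A preparation on a finite ontic state space `Λ` is a probability distribution
`q : Λ → ℝ` (nonnegative, summing to 1). -/
def IsPreparation {Λ : Type} [Fintype Λ] (q : Λ → ℝ) : Prop :=
  (∀ l : Λ, 0 ≤ q l) ∧ ∑ l : Λ, q l = 1

/-- The function induced on measurements by a preparation `q` of an ontological model with
outcome probabilities `f : Λ × M → [0,1]`:  `g_q(E) = Σ_λ q(λ)·f(λ,E)`. -/
noncomputable def prepFun {Λ M : Type} [Fintype Λ] (f : Λ → M → ℝ) (q : Λ → ℝ) :
    M → ℝ := fun E => ∑ l : Λ, q l * f l E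

namespace OccamAux

/-- Chernoff bound for an i.i.d. sum, written with finite sums. -/
lemma one_sided {Λ : Type} [Fintype Λ] (q : Λ → ℝ) (hq : IsPreparation q) (X : Λ → ℝ)
    (hX : ∀ l, |X l| ≤ 1) (h0 : ∑ l, q l * X l = 0) (k : ℕ) (t : ℝ) (ht0 : 0 < t) (ht1 : t ≤ 1) :
    ∑ a : Fin k → Λ, (∏ i, q (a i)) * (if k * t < ∑ i, X (a i) then (1 : ℝ) else 0)
      ≤ Real.exp (-(k * t ^ 2 / 4)) := by
  classical
  have hmgf : ∑ l, q l * Real.exp (t / 2 * X l) ≤ Real.exp ((t / 2) ^ 2) := by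
    calc ∑ l, q l * Real.exp (t / 2 * X l)
        ≤ ∑ l, q l * (1 + t / 2 * X l + (t / 2) ^ 2) := by
          apply Finset.sum_le_sum
          intro l _
          apply mul_le_mul_of_nonneg_left _ (hq.1 l)
          have hx : |t / 2 * X l| ≤ 1 := by
            rw [abs_mul, abs_of_pos (by positivity)]
            nlinarith [hX l, abs_nonneg (X l)]
          have h1 := (abs_le.1 (Real.abs_exp_sub_one_sub_id_le hx)).2
          have h2 : (X l) ^ 2 ≤ 1 := by
            rw [← sq_abs]; nlinarith [hX l, abs_nonneg (X l)]
          nlinarith [mul_le_mul_of_nonneg_left h2 (sq_nonneg (t / 2))]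
      _ = (∑ l, q l) * (1 + (t / 2) ^ 2) + t / 2 * ∑ l, q l * X l := by
          rw [Finset.sum_mul, Finset.mul_sum, ← Finset.sum_add_distrib]
          apply Finset.sum_congr rfl; intro l _; ring
      _ = (t / 2) ^ 2 + 1 := by rw [hq.2, h0]; ring
      _ ≤ _ := Real.add_one_le_exp _
  calc _ ≤ ∑ a : Fin k → Λ, (∏ i, q (a i)) *
          (Real.exp (-(k * t ^ 2 / 2)) * ∏ i, Real.exp (t / 2 * X (a i))) := by
        apply Finset.sum_le_sum
        intro a _
        apply mul_le_mul_of_nonneg_left _ (Finset.prod_nonneg fun i _ => hq.1 _)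
        rw [← Real.exp_sum, ← Real.exp_add]
        split_ifs with h
        · apply Real.one_le_exp
          rw [← Finset.mul_sum]
          nlinarith
        · positivity
    _ = Real.exp (-(k * t ^ 2 / 2)) * ∑ a : Fin k → Λ, ∏ i, (q (a i) * Real.exp (t / 2 * X (a i))) := by
        rw [Finset.mul_sum]
        apply Finset.sum_congr rfl; intro a _
        rw [Finset.prod_mul_distrib]; ring
    _ = Real.exp (-(k * t ^ 2 / 2)) * (∑ l, q l * Real.exp (t / 2 * X l)) ^ k := by
        congr 1
        rw [← Fintype.prod_sum (fun (_ : Fin k) l => q l * Real.exp (t / 2 * X l))]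
        simp
    _ ≤ Real.exp (-(k * t ^ 2 / 2)) * (Real.exp ((t / 2) ^ 2)) ^ k := by
        gcongr
        exact Finset.sum_nonneg fun l _ => mul_nonneg (hq.1 l) (Real.exp_pos _).le
    _ = _ := by
        rw [← Real.exp_nat_mul, ← Real.exp_add]
        congr 1; ring

lemma sum_w {Λ : Type} [Fintype Λ] (q : Λ → ℝ) (hq : IsPreparation q) (k : ℕ) :
    ∑ a : Fin k → Λ, (∏ i, q (a i)) = 1 := by
  classical
  rw [← Fintype.prod_sum (fun (_ : Fin k) l => q l)]
  simp [hq.2]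

lemma two_sided {Λ : Type} [Fintype Λ] (q : Λ → ℝ) (hq : IsPreparation q) (g : Λ → ℝ)
    (hg : ∀ l, g l ∈ Set.Icc (0 : ℝ) 1) (k : ℕ) (hk : 0 < k) (t : ℝ) (ht0 : 0 < t) (ht1 : t ≤ 1) :
    ∑ a : Fin k → Λ, (∏ i, q (a i)) *
        (if t < |(∑ i, g (a i)) / k - ∑ l, q l * g l| then (1 : ℝ) else 0)
      ≤ 2 * Real.exp (-(k * t ^ 2 / 4)) := by
  set μ := ∑ l, q l * g l with hμ
  have hμ0 : 0 ≤ μ := Finset.sum_nonneg fun l _ => mul_nonneg (hq.1 l) (hg l).1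
  have hμ1 : μ ≤ 1 := by
    rw [← hq.2]
    exact Finset.sum_le_sum fun l _ => by nlinarith [hq.1 l, (hg l).2]
  have hk' : (0 : ℝ) < k := by exact_mod_cast hk
  have hz : ∑ l, q l * (g l - μ) = 0 := by
    simp only [mul_sub, Finset.sum_sub_distrib, ← Finset.sum_mul, hq.2]
    rw [← hμ]; ring
  have h1 := one_sided q hq (fun l => g l - μ)
    (fun l => abs_le.2 ⟨by linarith [(hg l).1], by linarith [(hg l).2]⟩) hz k t ht0 ht1
  have h2 := one_sided q hq (fun l => -(g l - μ))
    (fun l => by rw [abs_neg]; exact abs_le.2 ⟨by linarith [(hg l).1], by linarith [(hg l).2]⟩)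
    (by simp only [mul_neg, Finset.sum_neg_distrib, hz, neg_zero]) k t ht0 ht1
  refine le_trans ?_ (le_trans (add_le_add h1 h2) (le_of_eq (by ring)))
  rw [← Finset.sum_add_distrib]
  apply Finset.sum_le_sum
  intro a _
  rw [← mul_add]
  apply mul_le_mul_of_nonneg_left _ (Finset.prod_nonneg fun i _ => hq.1 _)
  have e1 : ∑ i, (g (a i) - μ) = k * ((∑ i, g (a i)) / k - μ) := by
    rw [Finset.sum_sub_distrib]; simp; field_simp
  simp only [Finset.sum_neg_distrib]
  rw [e1]
  by_cases h : t < |(∑ i, g (a i)) / k - μ|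
  · rw [if_pos h]
    rcases lt_abs.1 h with h' | h'
    · rw [if_pos (by nlinarith)]
      split_ifs <;> norm_num
    · rw [if_pos (by nlinarith : (k : ℝ) * t < -(k * ((∑ i, g (a i)) / k - μ)))]
      split_ifs <;> norm_num
  · rw [if_neg h]
    split_ifs <;> norm_num

/-- Sparsification: a preparation is replaced by an empirical average of `k` ontic states. -/
lemma sparsify {Λ M : Type} [Fintype Λ] [MeasurableSpace M] (f : Λ → M → ℝ)
    (hf : ∀ l, Measurable (f l)) (hf1 : ∀ l E, f l E ∈ Set.Icc (0 : ℝ) 1)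
    (D : Measure M) [IsProbabilityMeasure D] (q : Λ → ℝ) (hq : IsPreparation q)
    (k : ℕ) (hk : 0 < k) (t : ℝ) (ht0 : 0 < t) (ht1 : t ≤ 1) (m : ℕ) (Es : Fin m → M)
    (c : ℝ) (hc : 0 < c)
    (hkm : (m + c) * (2 * Real.exp (-(k * t ^ 2 / 4))) < 1) :
    ∃ a : Fin k → Λ, (∀ j, |(∑ i, f (a i) (Es j)) / k - prepFun f q (Es j)| ≤ t) ∧
      c * D.real {E | t < |(∑ i, f (a i) E) / k - prepFun f q E|} < 1 := by
  classical
  set β := 2 * Real.exp (-(k * t ^ 2 / 4)) with hβ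
  let bad : (Fin k → Λ) → M → ℝ := fun a E =>
    if t < |(∑ i, f (a i) E) / k - prepFun f q E| then (1 : ℝ) else 0
  have hbad0 : ∀ a E, 0 ≤ bad a E := fun a E => by
    simp only [bad]; split_ifs <;> norm_num
  have hpm : Measurable (prepFun f q) := by
    unfold prepFun
    exact Finset.measurable_sum _ fun l _ => (hf l).const_mul _
  have hB : ∀ a : Fin k → Λ,
      MeasurableSet {E | t < |(∑ i, f (a i) E) / k - prepFun f q E|} := by
    intro a
    apply measurableSet_lt measurable_const
    exact (((Finset.measurable_sum _ fun i _ => hf (a i)).div_const _).sub hpm).abs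
  have hind : ∀ a, bad a =
      Set.indicator {E | t < |(∑ i, f (a i) E) / k - prepFun f q E|} (fun _ => (1 : ℝ)) := by
    intro a; funext E; simp [bad, Set.indicator_apply]
  have hint : ∀ a, Integrable (bad a) D := by
    intro a; rw [hind]; exact (integrable_const _).indicator (hB a)
  have hreal : ∀ a, ∫ E, bad a E ∂D =
      D.real {E | t < |(∑ i, f (a i) E) / k - prepFun f q E|} := by
    intro a; rw [hind, integral_indicator (hB a)]; simp
  have hpt : ∀ E, ∑ a : Fin k → Λ, (∏ i, q (a i)) * bad a E ≤ β := fun E =>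
    two_sided q hq (fun l => f l E) (fun l => hf1 l E) k hk t ht0 ht1
  have hD : ∑ a : Fin k → Λ, (∏ i, q (a i)) * ∫ E, bad a E ∂D ≤ β := by
    calc _ = ∫ E, ∑ a : Fin k → Λ, (∏ i, q (a i)) * bad a E ∂D := by
          rw [integral_finsetSum _ fun a _ => (hint a).const_mul _]
          simp only [integral_const_mul]
      _ ≤ ∫ _, β ∂D := integral_mono
          (integrable_finsetSum _ fun a _ => (hint a).const_mul _) (integrable_const _) hpt
      _ = β := by simp
  have hex : ∃ a : Fin k → Λ, (∑ j, bad a (Es j)) + c * ∫ E, bad a E ∂D < 1 := by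
    by_contra! hcon
    have : (1 : ℝ) ≤ (m + c) * β := by
      calc (1 : ℝ) = ∑ a : Fin k → Λ, (∏ i, q (a i)) * 1 := by simp [sum_w q hq]
        _ ≤ ∑ a : Fin k → Λ, (∏ i, q (a i)) * ((∑ j, bad a (Es j)) + c * ∫ E, bad a E ∂D) :=
            Finset.sum_le_sum fun a _ => mul_le_mul_of_nonneg_left (hcon a)
              (Finset.prod_nonneg fun i _ => hq.1 _)
        _ = (∑ j, ∑ a : Fin k → Λ, (∏ i, q (a i)) * bad a (Es j)) +
            c * ∑ a : Fin k → Λ, (∏ i, q (a i)) * ∫ E, bad a E ∂D := by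
            rw [Finset.sum_comm, Finset.mul_sum, ← Finset.sum_add_distrib]
            apply Finset.sum_congr rfl; intro a _
            rw [← Finset.mul_sum]; ring
        _ ≤ (∑ _j : Fin m, β) + c * β := by
            gcongr
            exact hpt _
        _ = _ := by simp; ring
    linarith
  obtain ⟨a, ha⟩ := hex
  have hi0 : 0 ≤ ∫ E, bad a E ∂D := integral_nonneg (hbad0 a)
  refine ⟨a, fun j => ?_, ?_⟩
  · by_contra! h
    have h1 : bad a (Es j) = 1 := by simp only [bad]; rw [if_pos h]
    have h2 : bad a (Es j) ≤ ∑ j, bad a (Es j) :=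
      Finset.single_le_sum (f := fun j => bad a (Es j)) (fun j _ => hbad0 a _) (Finset.mem_univ j)
    nlinarith
  · rw [← hreal]
    have : 0 ≤ ∑ j, bad a (Es j) := Finset.sum_nonneg fun j _ => hbad0 a _
    linarith

lemma miss {M : Type} [MeasurableSpace M] (D : Measure M) [IsProbabilityMeasure D]
    (A : Set M) (hA : MeasurableSet A) (e : ℝ) (he : e ≤ D.real A) (m : ℕ) :
    (Measure.pi fun _ : Fin m => D) {Es | ∀ i, Es i ∉ A} ≤ ENNReal.ofReal (Real.exp (-(e * m))) := by
  have h1 : {Es : Fin m → M | ∀ i, Es i ∉ A} = Set.univ.pi fun _ => Aᶜ := by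
    ext; simp [Set.mem_pi]
  rw [h1, Measure.pi_pi]
  simp only [Finset.prod_const, Finset.card_univ, Fintype.card_fin]
  have h2 : D Aᶜ ≤ ENNReal.ofReal (Real.exp (-e)) := by
    rw [← ofReal_measureReal (measure_ne_top _ _)]
    apply ENNReal.ofReal_le_ofReal
    rw [probReal_compl_eq_one_sub hA]
    linarith [Real.add_one_le_exp (-e)]
  calc _ ≤ (ENNReal.ofReal (Real.exp (-e))) ^ m := by gcongr
    _ = _ := by
      rw [← ENNReal.ofReal_pow (Real.exp_pos _).le, ← Real.exp_nat_mul]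
      congr 2; ring

lemma finish {X : Type} [MeasurableSpace X] (P : Measure X) [IsProbabilityMeasure P]
    (S : Set X) (δ : ℝ) (h : P Sᶜ ≤ ENNReal.ofReal δ) : 1 - ENNReal.ofReal δ ≤ P S := by
  rw [tsub_le_iff_right]
  calc (1 : ENNReal) = P (S ∪ Sᶜ) := by simp
    _ ≤ P S + P Sᶜ := measure_union_le _ _
    _ ≤ _ := by gcongr

/-- One-parameter case. -/
lemma oneparam {M : Type} [MeasurableSpace M] (D : Measure M) [IsProbabilityMeasure D]
    (h : M → ℝ) (hm : Measurable h) (hh : ∀ E, |h E| ≤ 1) (e γ η : ℝ) (he : 0 < e)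
    (hη : 0 < η) (hγ : η < γ) (m : ℕ) :
    (Measure.pi fun _ : Fin m => D)
      {Es | ∃ t : ℝ, (∀ i, |t * h (Es i)| ≤ η) ∧ e < D.real {E | γ < |t * h E|}}
      ≤ ENNReal.ofReal (Real.exp (-(e * m))) := by
  let S : Set ℝ := {s | 0 < s ∧ e < D.real {E | s < |h E|}}
  have key : ∀ Es : Fin m → M,
      (∃ t : ℝ, (∀ i, |t * h (Es i)| ≤ η) ∧ e < D.real {E | γ < |t * h E|}) →
      ∃ s ∈ S, ∀ i, |h (Es i)| < s := by
    rintro Es ⟨t, h1, h2⟩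
    have ht : 0 < |t| := by
      rw [abs_pos]; rintro rfl
      have : {E | γ < |0 * h E|} = ∅ := by
        ext E; simp; linarith
      rw [this] at h2; simp at h2; linarith
    refine ⟨γ / |t|, ⟨by apply div_pos _ ht; linarith, ?_⟩, fun i => ?_⟩
    · convert h2 using 4 with E
      rw [abs_mul, div_lt_iff₀ ht, mul_comm]
    · rw [lt_div_iff₀ ht]
      have := h1 i
      rw [abs_mul] at this
      linarith [mul_comm |t| |h (Es i)|]
  by_cases hS : S.Nonempty
  · have hbdd : BddAbove S := by
      refine ⟨1, fun s hs => ?_⟩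
      by_contra! hcon
      have : {E | s < |h E|} = ∅ := by
        ext E; simp; linarith [hh E]
      have h2 := hs.2
      rw [this] at h2; simp at h2; linarith
    obtain ⟨u, hu, hut, huS⟩ := exists_seq_tendsto_sSup hS hbdd
    have hmeas : ∀ s, MeasurableSet {E | s < |h E|} := fun s =>
      measurableSet_lt measurable_const hm.abs
    have hlim := tendsto_measure_iInter_atTop (μ := D) (s := fun n => {E | u n < |h E|})
      (fun n => (hmeas _).nullMeasurableSet)
      (fun a b hab E hE => lt_of_le_of_lt (hu hab) hE) ⟨0, measure_ne_top _ _⟩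
    have hge : ENNReal.ofReal e ≤ D (⋂ n, {E | u n < |h E|}) := by
      refine ge_of_tendsto' hlim fun n => ?_
      exact ENNReal.ofReal_le_of_le_toReal (huS n).2.le
    have hsub : (⋂ n, {E | u n < |h E|}) ⊆ {E | sSup S ≤ |h E|} := by
      intro E hE
      simp only [Set.mem_iInter, Set.mem_ofPred_eq] at hE
      exact le_of_tendsto' hut fun n => (hE n).le
    have hle : e ≤ D.real {E | sSup S ≤ |h E|} :=
      (ENNReal.ofReal_le_iff_le_toReal (measure_ne_top _ _)).1
        (hge.trans (measure_mono hsub))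
    refine le_trans (measure_mono ?_) (miss D _ (measurableSet_le measurable_const hm.abs) e hle m)
    intro Es hEs i
    obtain ⟨s, hs, hi⟩ := key Es hEs
    simp only [Set.mem_ofPred_eq, not_le]
    exact lt_of_lt_of_le (hi i) (le_csSup hbdd hs)
  · have : {Es : Fin m → M | ∃ t : ℝ, (∀ i, |t * h (Es i)| ≤ η) ∧ e < D.real {E | γ < |t * h E|}}
        = ∅ := by
      rw [Set.eq_empty_iff_forall_notMem]
      intro Es hEs
      obtain ⟨s, hs, _⟩ := key Es hEs
      exact hS ⟨s, hs⟩
    rw [this]; simp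

lemma numeric (L Δ ε x : ℝ) (hL : 3 / 2 ≤ L) (hΔ0 : 0 < Δ) (hΔ1 : Δ ≤ 1) (hε0 : 0 < ε) (hε1 : ε < 1)
    (m : ℝ) (hm : m = x * (L / (ε * Δ ^ 2)))
    (hx : 20000 * (Real.log (L / (Δ * ε))) ^ 2 ≤ x) :
    (68 * 0.7) * Real.log (2 * m + 4 / ε) ≤ x := by
  set A := L / (Δ * ε) with hA
  have hΔε : 0 < Δ * ε := by positivity
  have hA1 : L ≤ A := by
    rw [hA, le_div_iff₀ hΔε]
    have : Δ * ε ≤ 1 := by nlinarith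
    nlinarith
  have hAp : 0 < A := by linarith
  have hlog : 1 / 3 ≤ Real.log A := by
    have := Real.one_sub_inv_le_log_of_pos hAp
    have h2 : A⁻¹ ≤ 2 / 3 := by
      rw [inv_le_comm₀ hAp (by norm_num)]; norm_num; linarith
    linarith
  have hB : L / (ε * Δ ^ 2) ≤ A ^ 2 := by
    rw [hA, div_pow, div_le_div_iff₀ (by positivity) (by positivity)]
    have : ε * L ≤ L ^ 2 := by nlinarith
    nlinarith [mul_le_mul_of_nonneg_left this (by positivity : 0 ≤ ε * Δ ^ 2)]
  have hi : 1 / ε ≤ A ^ 2 := by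
    have : 1 / ε ≤ A := by
      rw [hA, div_le_div_iff₀ hε0 hΔε]; nlinarith
    nlinarith
  have hx0 : 2000 ≤ x := by nlinarith
  have hx1 : 6000 * Real.log A ≤ x := by nlinarith
  have hx' : 0 ≤ x := by linarith
  have h4 : 4 / ε = 4 * (1 / ε) := by ring
  have hmp : 0 ≤ m := by rw [hm]; positivity
  have hmain : Real.log (2 * m + 4 / ε) ≤ 2 * Real.log A + Real.log (2 * x + 4) := by
    have : Real.log (2 * m + 4 / ε) ≤ Real.log (A ^ 2 * (2 * x + 4)) := by
      apply Real.log_le_log (by positivity)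
      rw [hm, h4]; nlinarith
    rw [Real.log_mul (by positivity) (by positivity), Real.log_pow] at this
    exact_mod_cast this
  have h5 : Real.log (2 * x + 4) ≤ (2 * x + 4) / 512 - 1 + 9 * Real.log 2 := by
    have e1 : Real.log (2 * x + 4) = Real.log ((2 * x + 4) / 512) + Real.log 512 := by
      rw [← Real.log_mul (by positivity) (by norm_num)]; congr 1; ring
    have e2 : Real.log 512 = 9 * Real.log 2 := by
      rw [show (512 : ℝ) = 2 ^ 9 by norm_num, Real.log_pow]; norm_num
    rw [e1, e2]
    linarith [Real.log_le_sub_one_of_pos (show 0 < (2 * x + 4) / 512 by positivity)]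
  have := Real.log_two_lt_d9
  norm_num at *
  nlinarith

/-- Main case. -/
lemma mainCase {Λ M : Type} [Fintype Λ] [MeasurableSpace M] (f : Λ → M → ℝ)
    (hf : ∀ l, Measurable (f l)) (hf1 : ∀ l E, f l E ∈ Set.Icc (0 : ℝ) 1)
    (D : Measure M) [IsProbabilityMeasure D] (p : Λ → ℝ)
    (ε γ η : ℝ) (hε : 0 < ε) (hη : 0 < η) (hγ : η < γ) (hγ1 : γ ≤ 1) (m k : ℕ) (hk : 0 < k)
    (hkm : (m + 2 / ε) * (2 * Real.exp (-(k * ((γ - η) / 2) ^ 2 / 4))) < 1) :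
    (Measure.pi fun _ : Fin m => D)
      {Es | ∃ q : Λ → ℝ, IsPreparation q ∧
        (∀ i : Fin m, |prepFun f q (Es i) - prepFun f p (Es i)| ≤ η) ∧
        ε < D.real {E : M | γ < |prepFun f q E - prepFun f p E|}} ≤
      ENNReal.ofReal ((Fintype.card Λ) ^ k * Real.exp (-(ε / 2 * m))) := by
  classical
  set θ := (γ + η) / 2 with hθ
  let A : (Fin k → Λ) → Set M := fun a => {E | θ < |(∑ i, f (a i) E) / k - prepFun f p E|}
  have hpm : Measurable (prepFun f p) := by
    unfold prepFun
    exact Finset.measurable_sum _ fun l _ => (hf l).const_mul _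
  have hA : ∀ a, MeasurableSet (A a) := by
    intro a
    apply measurableSet_lt measurable_const
    exact (((Finset.measurable_sum _ fun i _ => hf (a i)).div_const _).sub hpm).abs
  let G : Finset (Fin k → Λ) := Finset.univ.filter fun a => ε / 2 ≤ D.real (A a)
  have hsub : {Es : Fin m → M | ∃ q : Λ → ℝ, IsPreparation q ∧
        (∀ i : Fin m, |prepFun f q (Es i) - prepFun f p (Es i)| ≤ η) ∧
        ε < D.real {E : M | γ < |prepFun f q E - prepFun f p E|}} ⊆
      ⋃ a ∈ G, {Es | ∀ i, Es i ∉ A a} := by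
    rintro Es ⟨q, hq, hc, hb⟩
    obtain ⟨a, ha1, ha2⟩ := sparsify f hf hf1 D q hq k hk ((γ - η) / 2) (by linarith) (by linarith)
      m Es (2 / ε) (by positivity) hkm
    simp only [Set.mem_iUnion]
    refine ⟨a, ?_, ?_⟩
    · simp only [G, Finset.mem_filter, Finset.mem_univ, true_and]
      have hs : {E : M | γ < |prepFun f q E - prepFun f p E|} ⊆
          A a ∪ {E | (γ - η) / 2 < |(∑ i, f (a i) E) / k - prepFun f q E|} := by
        intro E hE
        by_contra hcon
        simp only [A, Set.mem_union, Set.mem_ofPred_eq, not_or, not_lt] at hcon hE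
        have := abs_sub_le (prepFun f q E) ((∑ i, f (a i) E) / k) (prepFun f p E)
        rw [abs_sub_comm (prepFun f q E) ((∑ i, f (a i) E) / k)] at this
        linarith [hcon.1, hcon.2]
      have h1 := (measureReal_mono (μ := D) hs).trans (measureReal_union_le _ _)
      rw [div_mul_eq_mul_div, div_lt_one hε] at ha2
      linarith
    · intro i
      simp only [A, Set.mem_ofPred_eq, not_lt]
      have := abs_sub_le ((∑ j, f (a j) (Es i)) / k) (prepFun f q (Es i)) (prepFun f p (Es i))
      linarith [ha1 i, hc i]
  calc _ ≤ _ := measure_mono hsub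
    _ ≤ ∑ a ∈ G, (Measure.pi fun _ : Fin m => D) {Es | ∀ i, Es i ∉ A a} :=
        measure_biUnion_finset_le _ _
    _ ≤ ∑ a ∈ G, ENNReal.ofReal (Real.exp (-(ε / 2 * m))) := by
        apply Finset.sum_le_sum
        intro a ha
        exact miss D _ (hA a) _ (Finset.mem_filter.1 ha).2 m
    _ ≤ ∑ a : Fin k → Λ, ENNReal.ofReal (Real.exp (-(ε / 2 * m))) :=
        Finset.sum_le_sum_of_subset (Finset.subset_univ _)
    _ = _ := by
        rw [ENNReal.ofReal_mul (by positivity)]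
        simp [ENNReal.ofReal_pow]

lemma small_case {Λ M : Type} [Fintype Λ] [Nonempty Λ] [MeasurableSpace M] (hc : Fintype.card Λ ≤ 2)
    (f : Λ → M → ℝ)
    (hf : ∀ l, Measurable (f l)) (hf1 : ∀ l E, f l E ∈ Set.Icc (0 : ℝ) 1)
    (p : Λ → ℝ) (hp : IsPreparation p) :
    ∃ h : M → ℝ, Measurable h ∧ (∀ E, |h E| ≤ 1) ∧
      ∀ q, IsPreparation q → ∃ t, ∀ E, prepFun f q E - prepFun f p E = t * h E := by
  classical
  have : ∃ a b : Λ, ∀ c, c = a ∨ c = b := by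
    obtain ⟨a⟩ := ‹Nonempty Λ›
    by_contra! hcon
    obtain ⟨b, hb, -⟩ := hcon a a
    obtain ⟨c, hc1, hc2⟩ := hcon a b
    have := Finset.card_le_univ ({a, b, c} : Finset Λ)
    rw [Finset.card_eq_three.2 ⟨a, b, c, hb.symm, hc1.symm, hc2.symm, rfl⟩] at this
    omega
  obtain ⟨a, b, hab⟩ := this
  refine ⟨fun E => f a E - f b E, (hf a).sub (hf b), fun E => ?_, fun q hq => ?_⟩
  · exact abs_le.2 ⟨by linarith [(hf1 a E).1, (hf1 b E).2], by linarith [(hf1 a E).2, (hf1 b E).1]⟩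
  · refine ⟨q a - p a, fun E => ?_⟩
    have h2 : prepFun f q E - prepFun f p E = ∑ l, (q l - p l) * (f l E - f b E) := by
      simp only [mul_sub, Finset.sum_sub_distrib, ← Finset.sum_mul]
      rw [hq.2, hp.2]; simp [prepFun, sub_mul, Finset.sum_sub_distrib]
    rw [h2]
    apply Finset.sum_eq_single_of_mem a (Finset.mem_univ a)
    intro c _ hca
    rcases hab c with h | h
    · exact absurd h hca
    · rw [h]; ring

lemma prepFun_mem {Λ M : Type} [Fintype Λ] (f : Λ → M → ℝ)
    (hf1 : ∀ l E, f l E ∈ Set.Icc (0 : ℝ) 1) (q : Λ → ℝ) (hq : IsPreparation q) (E : M) :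
    0 ≤ prepFun f q E ∧ prepFun f q E ≤ 1 := by
  refine ⟨Finset.sum_nonneg fun l _ => mul_nonneg (hq.1 l) (hf1 l E).1, ?_⟩
  rw [← hq.2]
  exact Finset.sum_le_sum fun l _ => by nlinarith [hq.1 l, (hf1 l E).2]

end OccamAux

/-- **Occam's razor for efficient ontological models.**  There is a universal constant
`K > 0` such that: for every finite nonempty ontic space `Λ`, measurable space of
measurements `M` with outcome-probability function `f : Λ × M → [0,1]` measurable in its
second argument, probability measure `D` on `M`, target preparation `p`, parameters
`ε, δ ∈ (0,1)` and `γ > η > 0`, if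
`m ≥ (K/ε)·((log₂|Λ|/(γ−η)²)·log²(log₂|Λ|/((γ−η)ε)) + log(1/δ))`
then with probability at least `1 − δ` over `E₁,…,E_m` drawn i.i.d. from `D`, every
preparation `q` with `|g_q(E_i) − g_p(E_i)| ≤ η` for all `i` satisfies
`Pr_{E∼D}[|g_q(E) − g_p(E)| > γ] ≤ ε`. -/
theorem occams_razor_for_EOMs :
    ∃ K : ℝ, 0 < K ∧
      ∀ (Λ : Type) (_ : Fintype Λ), Nonempty Λ →
      ∀ (M : Type) (_ : MeasurableSpace M) (f : Λ → M → ℝ),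
        (∀ l : Λ, Measurable (f l)) →
        (∀ (l : Λ) (E : M), f l E ∈ Set.Icc (0 : ℝ) 1) →
      ∀ (D : Measure M), IsProbabilityMeasure D →
      ∀ p : Λ → ℝ, IsPreparation p →
      ∀ ε δ γ η : ℝ,
        ε ∈ Set.Ioo (0 : ℝ) 1 → δ ∈ Set.Ioo (0 : ℝ) 1 → 0 < η → η < γ →
      ∀ m : ℕ,
        (m : ℝ) ≥ K / ε *
            ((Real.logb 2 (Fintype.card Λ) / (γ - η) ^ 2) *
                (Real.log (Real.logb 2 (Fintype.card Λ) / ((γ - η) * ε))) ^ 2 +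
              Real.log (1 / δ)) →
        1 - ENNReal.ofReal δ ≤
          (Measure.pi fun _ : Fin m => D)
            {Es : Fin m → M |
              ∀ q : Λ → ℝ, IsPreparation q →
                (∀ i : Fin m, |prepFun f q (Es i) - prepFun f p (Es i)| ≤ η) →
                D {E : M | γ < |prepFun f q E - prepFun f p E|} ≤ ENNReal.ofReal ε} := by
  refine ⟨20000, by norm_num, ?_⟩
  intro Λ _ hne M _ f hf hf1 D _ p hp ε δ γ η hε hδ hη hγ m hm
  apply OccamAux.finish
  obtain ⟨hε0, hε1⟩ := hε
  obtain ⟨hδ0, hδ1⟩ := hδ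
  have hset : {Es : Fin m → M | ∀ q : Λ → ℝ, IsPreparation q →
      (∀ i : Fin m, |prepFun f q (Es i) - prepFun f p (Es i)| ≤ η) →
      D {E : M | γ < |prepFun f q E - prepFun f p E|} ≤ ENNReal.ofReal ε}ᶜ =
      {Es | ∃ q : Λ → ℝ, IsPreparation q ∧
        (∀ i : Fin m, |prepFun f q (Es i) - prepFun f p (Es i)| ≤ η) ∧
        ε < D.real {E : M | γ < |prepFun f q E - prepFun f p E|}} := by
    ext Es
    simp only [Set.mem_compl_iff, Set.mem_ofPred_eq, not_forall, not_le, exists_prop]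
    refine exists_congr fun q => and_congr_right fun _ => and_congr_right fun _ => ?_
    exact ENNReal.ofReal_lt_iff_lt_toReal hε0.le (measure_ne_top _ _)
  rw [hset]
  have hlδ : 0 < Real.log (1 / δ) := Real.log_pos (by rw [lt_div_iff₀ hδ0]; linarith)
  have hcard : 1 ≤ Fintype.card Λ := Fintype.card_pos
  set L := Real.logb 2 (Fintype.card Λ) with hL
  have hL0 : 0 ≤ L := Real.logb_nonneg (by norm_num) (by exact_mod_cast hcard)
  have hΔ : 0 < γ - η := by linarith
  set lg := Real.log (L / ((γ - η) * ε)) with hlg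
  have hT : 0 ≤ L / (γ - η) ^ 2 * lg ^ 2 := by positivity
  have hmε : 20000 * (L / (γ - η) ^ 2 * lg ^ 2 + Real.log (1 / δ)) ≤ m * ε := by
    rw [ge_iff_le, div_mul_eq_mul_div, div_le_iff₀ hε0] at hm
    exact hm
  have hmδ : 20000 * Real.log (1 / δ) ≤ m * ε := by linarith
  have hexpδ : Real.exp (-Real.log (1 / δ)) = δ := by
    rw [one_div, Real.log_inv, neg_neg, Real.exp_log hδ0]
  rcases le_or_gt 1 γ with hγ1 | hγ1
  · refine le_trans (le_of_eq ?_) (zero_le)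
    refine (congrArg _ ?_).trans (measure_empty (μ := Measure.pi fun _ : Fin m => D))
    rw [Set.eq_empty_iff_forall_notMem]
    rintro Es ⟨q, hq, -, hb⟩
    have : {E : M | γ < |prepFun f q E - prepFun f p E|} = ∅ := by
      rw [Set.eq_empty_iff_forall_notMem]
      intro E hE
      have h1 := OccamAux.prepFun_mem f hf1 q hq E
      have h2 := OccamAux.prepFun_mem f hf1 p hp E
      have : |prepFun f q E - prepFun f p E| ≤ 1 := abs_le.2 ⟨by linarith, by linarith⟩
      simp only [Set.mem_ofPred_eq] at hE
      linarith
    rw [this] at hb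
    simp at hb
    linarith
  rcases Nat.lt_or_ge 2 (Fintype.card Λ) with hc | hc
  swap
  · obtain ⟨h, hhm, hh1, hh⟩ := OccamAux.small_case hc f hf hf1 p hp
    refine le_trans (measure_mono ?_) ((OccamAux.oneparam D h hhm hh1 ε γ η hε0 hη hγ m).trans ?_)
    · rintro Es ⟨q, hq, h1, h2⟩
      obtain ⟨t, ht⟩ := hh q hq
      simp only [ht] at h1 h2
      exact ⟨t, h1, h2⟩
    · apply ENNReal.ofReal_le_ofReal
      rw [← hexpδ]
      apply Real.exp_le_exp.2
      nlinarith
  -- main case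
  have hlog2 := Real.log_two_lt_d9
  have hlog2' := Real.log_two_gt_d9
  have hN : Real.log (Fintype.card Λ) = L * Real.log 2 := by
    rw [hL, Real.logb, div_mul_cancel₀]; positivity
  have hL1 : 3 / 2 ≤ L := by
    rw [hL, Real.le_logb_iff_rpow_le (by norm_num) (by exact_mod_cast hcard)]
    have h3 : (3 : ℝ) ≤ Fintype.card Λ := by exact_mod_cast hc
    refine le_trans ?_ h3
    apply le_of_sq_le_sq _ (by norm_num)
    rw [← Real.rpow_natCast, ← Real.rpow_mul (by norm_num)]
    norm_num
  set Δ := γ - η with hΔdef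
  have hΔ1 : Δ ≤ 1 := by linarith
  have hLp : 0 < L := by linarith
  set x := (m : ℝ) * (ε * Δ ^ 2 / L) with hx
  have hmx : (m : ℝ) = x * (L / (ε * Δ ^ 2)) := by rw [hx]; field_simp
  have hxl : 20000 * lg ^ 2 ≤ x := by
    have : 20000 * (L / Δ ^ 2 * lg ^ 2) ≤ m * ε := by linarith
    have h2 := mul_le_mul_of_nonneg_right this (show 0 ≤ Δ ^ 2 / L by positivity)
    calc 20000 * lg ^ 2 = 20000 * (L / Δ ^ 2 * lg ^ 2) * (Δ ^ 2 / L) := by field_simp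
      _ ≤ _ := h2
      _ = x := by rw [hx]; ring
  have hnum := OccamAux.numeric L Δ ε x hL1 hΔ hΔ1 hε0 hε1 m hmx hxl
  set W := Real.log (2 * m + 4 / ε) with hW
  have hWarg : 4 < 2 * (m : ℝ) + 4 / ε := by
    have : 4 < 4 / ε := by rw [lt_div_iff₀ hε0]; linarith
    have : (0 : ℝ) ≤ m := Nat.cast_nonneg m
    linarith
  have hW1 : 1 ≤ W := by
    have : Real.log 4 ≤ W := Real.log_le_log (by norm_num) hWarg.le
    rw [show (4 : ℝ) = 2 ^ 2 by norm_num, Real.log_pow] at this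
    norm_num at this
    linarith
  set k := ⌊16 * W / Δ ^ 2⌋₊ + 1 with hk
  have hk1 : 16 * W / Δ ^ 2 < k := by rw [hk]; push_cast; exact Nat.lt_floor_add_one _
  have hk2 : (k : ℝ) ≤ 17 * W / Δ ^ 2 := by
    have h1 : (⌊16 * W / Δ ^ 2⌋₊ : ℝ) ≤ 16 * W / Δ ^ 2 := Nat.floor_le (by positivity)
    have h2 : 1 ≤ W / Δ ^ 2 := by rw [le_div_iff₀ (by positivity)]; nlinarith
    have h3 : 17 * W / Δ ^ 2 = 16 * W / Δ ^ 2 + W / Δ ^ 2 := by ring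
    rw [hk, h3]; push_cast; linarith
  have hkm : ((m : ℝ) + 2 / ε) * (2 * Real.exp (-(k * (Δ / 2) ^ 2 / 4))) < 1 := by
    have h1 : W < k * (Δ / 2) ^ 2 / 4 := by
      rw [div_lt_iff₀ (by positivity)] at hk1
      linarith
    have h2 : Real.exp (-(k * (Δ / 2) ^ 2 / 4)) < Real.exp (-W) := Real.exp_lt_exp.2 (by linarith)
    have h3 : Real.exp (-W) = (2 * (m : ℝ) + 4 / ε)⁻¹ := by
      rw [Real.exp_neg, hW, Real.exp_log (by linarith)]
    rw [h3] at h2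
    have h4 : ((m : ℝ) + 2 / ε) * (2 * Real.exp (-(k * (Δ / 2) ^ 2 / 4)))
      = (2 * (m : ℝ) + 4 / ε) * Real.exp (-(k * (Δ / 2) ^ 2 / 4)) := by ring
    rw [h4]
    have hp : 0 < 2 * (m : ℝ) + 4 / ε := by linarith
    calc _ < (2 * (m : ℝ) + 4 / ε) * (2 * (m : ℝ) + 4 / ε)⁻¹ := mul_lt_mul_of_pos_left h2 hp
      _ = 1 := mul_inv_cancel₀ hp.ne'
  refine (OccamAux.mainCase f hf hf1 D p ε γ η hε0 hη hγ hγ1.le m k (Nat.succ_pos _) hkm).trans ?_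
  apply ENNReal.ofReal_le_ofReal
  have hcp : (0 : ℝ) < Fintype.card Λ := by exact_mod_cast hcard
  have hpow : ((Fintype.card Λ : ℝ)) ^ k = Real.exp (k * (L * Real.log 2)) := by
    rw [← hN, Real.exp_nat_mul, Real.exp_log hcp]
  rw [hpow, ← Real.exp_add, ← hexpδ]
  apply Real.exp_le_exp.2
  have hkL : k * (L * Real.log 2) ≤ ε * m / 4 := by
    calc (k : ℝ) * (L * Real.log 2) ≤ (17 * W / Δ ^ 2) * (L * 0.7) := by
          gcongr
          norm_num; linarith
      _ = (68 * 0.7 * W) * (L / Δ ^ 2) / 4 := by ring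
      _ ≤ x * (L / Δ ^ 2) / 4 := by gcongr
      _ = ε * m / 4 := by rw [hx]; field_simp
  linarith
end

section
/- Let Λ be a finite nonempty set, k ≥ 1 a natural number, and p ∈ [1/2, 1]. Suppose for every string y ∈ {0,1}^k there is a probability distribution μ_y : Λ → [0,1] (with Σ_λ μ_y(λ) = 1), and there are functions f₁,…,f_k : Λ → [0,1] such that for all y ∈ {0,1}^k and all i ∈ {1,…,k}: if y_i = 0 then Σ_{λ∈Λ} μ_y(λ)·f_i(λ) ≥ p, and if y_i = 1 then Σ_{λ∈Λ} μ_y(λ)·(1 − f_i(λ)) ≥ p. Then k·(1 − H₂(p)) ≤ log₂|Λ|, where H₂(p) = −p·log₂ p − (1−p)·log₂(1−p) is the binary entropy function (with H₂(0) = H₂(1) = 0). -/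
/-- The binary entropy function with logarithm base 2,
`H₂(p) = −p·log₂ p − (1−p)·log₂(1−p)` (with `H₂(0) = H₂(1) = 0`, using the convention
`log 0 = 0`). -/
noncomputable def binEntropy2 (p : ℝ) : ℝ :=
  -(p * Real.logb 2 p) - (1 - p) * Real.logb 2 (1 - p)

/-- probability assigned to the correct bit -/
noncomputable def racG {Λ : Type} {k : ℕ} (f : Fin k → Λ → ℝ) (i : Fin k) (b : Bool) (l : Λ) : ℝ :=
  if b then 1 - f i l else f i l

theorem rac_aux
    (Λ : Type) [Fintype Λ] [Nonempty Λ] (k : ℕ)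
    (p : ℝ) (hp : 1 / 2 ≤ p) (hp1 : p < 1)
    (μ : (Fin k → Bool) → Λ → ℝ)
    (hμ0 : ∀ (y : Fin k → Bool) (l : Λ), 0 ≤ μ y l)
    (hμ1 : ∀ y : Fin k → Bool, ∑ l : Λ, μ y l = 1)
    (f : Fin k → Λ → ℝ)
    (hf : ∀ (i : Fin k) (l : Λ), f i l ∈ Set.Icc (0 : ℝ) 1)
    (h : ∀ (y : Fin k → Bool) (i : Fin k), p ≤ ∑ l : Λ, μ y l * racG f i (y i) l) :
    (k : ℝ) * (Real.log 2 - Real.binEntropy p) ≤ Real.log (Fintype.card Λ) := by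
  have hp0 : 0 < p := by linarith
  have hq0 : 0 < 1 - p := by linarith
  have hab : Real.log (1 - p) ≤ Real.log p := Real.log_le_log hq0 (by linarith)
  set a := Real.log p with ha
  set b := Real.log (1 - p) with hb
  have hea : Real.exp a = p := Real.exp_log hp0
  have heb : Real.exp b = 1 - p := Real.exp_log hq0
  have hH : Real.binEntropy p = -(p * a + (1 - p) * b) := by
    simp only [Real.binEntropy, Real.log_inv, ← ha, ← hb]; ring
  have hg0 : ∀ i c l, 0 ≤ racG f i c l := by
    intro i c l
    have := hf i l
    unfold racG; split_ifs
    · linarith [this.2]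
    · exact this.1
  have hg1 : ∀ i c l, racG f i c l ≤ 1 := by
    intro i c l
    have := hf i l
    unfold racG; split_ifs
    · linarith [this.1]
    · exact this.2
  let q : Fin k → Bool → Λ → ℝ := fun i c l => racG f i c l * p + (1 - racG f i c l) * (1 - p)
  let s : Fin k → Bool → Λ → ℝ := fun i c l => racG f i c l * a + (1 - racG f i c l) * b
  have hsq : ∀ i c l, Real.exp (s i c l) ≤ q i c l := by
    intro i c l
    have := convexOn_exp.2 (Set.mem_univ a) (Set.mem_univ b) (hg0 i c l)
      (sub_nonneg.2 (hg1 i c l)) (by ring)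
    simpa only [smul_eq_mul, hea, heb] using this
  have hsum : ∀ l, ∑ y : Fin k → Bool, ∏ i, q i (y i) l = 1 := by
    intro l
    have := Finset.prod_univ_sum (fun _ : Fin k => (Finset.univ : Finset Bool))
      (fun i c => q i c l)
    rw [Fintype.piFinset_univ] at this
    rw [← this]
    apply Finset.prod_eq_one
    intro i _
    simp only [Fintype.sum_bool, q, racG]
    simp
    ring
  have hμle : ∀ y l, μ y l ≤ 1 := by
    intro y l
    rw [← hμ1 y]
    exact Finset.single_le_sum (fun l _ => hμ0 y l) (Finset.mem_univ l)
  have hq : ∀ i c l, 0 ≤ q i c l := fun i c l => (Real.exp_pos _).le.trans (hsq i c l)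
  have key : ∀ y, Real.exp (-(k * Real.binEntropy p)) ≤ ∑ l, μ y l * ∏ i, q i (y i) l := by
    intro y
    have e1 : -(k * Real.binEntropy p) ≤ ∑ l, μ y l * ∑ i, s i (y i) l := by
      have : ∑ l, μ y l * ∑ i, s i (y i) l
          = ∑ i : Fin k, ((∑ l, μ y l * racG f i (y i) l) * (a - b) + b) := by
        simp_rw [Finset.mul_sum]
        rw [Finset.sum_comm]
        apply Finset.sum_congr rfl
        intro i _
        have hb' : b = ∑ l, μ y l * b := by rw [← Finset.sum_mul, hμ1, one_mul]
        conv_rhs => rw [Finset.sum_mul]; arg 2; rw [hb']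
        rw [← Finset.sum_add_distrib]
        apply Finset.sum_congr rfl
        intro l _
        simp only [s]; ring
      rw [this]
      have h2 : ∑ i : Fin k, (p * (a - b) + b) ≤
          ∑ i : Fin k, ((∑ l, μ y l * racG f i (y i) l) * (a - b) + b) := by
        apply Finset.sum_le_sum
        intro i _
        have := mul_le_mul_of_nonneg_right (h y i) (sub_nonneg.2 hab)
        linarith
      refine le_trans (le_of_eq ?_) h2
      rw [hH]; simp; ring
    calc Real.exp (-(k * Real.binEntropy p)) ≤ Real.exp (∑ l, μ y l * ∑ i, s i (y i) l) :=
          Real.exp_le_exp.2 e1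
      _ ≤ ∑ l, μ y l * Real.exp (∑ i, s i (y i) l) := by
          have := convexOn_exp.map_sum_le (t := Finset.univ) (w := μ y)
            (p := fun l => ∑ i, s i (y i) l) (fun l _ => hμ0 y l) (hμ1 y)
            (fun _ _ => Set.mem_univ _)
          simpa only [smul_eq_mul] using this
      _ ≤ _ := by
          apply Finset.sum_le_sum
          intro l _
          apply mul_le_mul_of_nonneg_left _ (hμ0 y l)
          rw [Real.exp_sum]
          exact Finset.prod_le_prod (fun i _ => (Real.exp_pos _).le) (fun i _ => hsq _ _ _)
  have tot : (2 : ℝ) ^ k * Real.exp (-(k * Real.binEntropy p)) ≤ Fintype.card Λ := by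
    calc (2 : ℝ) ^ k * Real.exp (-(k * Real.binEntropy p))
        = ∑ _y : Fin k → Bool, Real.exp (-(k * Real.binEntropy p)) := by simp
      _ ≤ ∑ y : Fin k → Bool, ∑ l, μ y l * ∏ i, q i (y i) l :=
          Finset.sum_le_sum (fun y _ => key y)
      _ ≤ ∑ y : Fin k → Bool, ∑ l, ∏ i, q i (y i) l := by
          apply Finset.sum_le_sum
          intro y _
          apply Finset.sum_le_sum
          intro l _
          exact mul_le_of_le_one_left (Finset.prod_nonneg (fun i _ => hq _ _ _)) (hμle y l)
      _ = Fintype.card Λ := by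
          rw [Finset.sum_comm]; simp [hsum]
  have := Real.log_le_log (by positivity) tot
  rw [Real.log_mul (by positivity) (by positivity), Real.log_exp, Real.log_pow] at this
  linarith

/-- **Random access code bound for preparations of an efficient ontological model.**
Let `Λ` be a finite nonempty ontic state space, `k ≥ 1`, and `p ∈ [1/2, 1]`.  Suppose for
every `y ∈ {0,1}^k` there is a probability distribution `μ_y` on `Λ`, and there are
outcome-probability functions `f₁,…,f_k : Λ → [0,1]` such that for all `y` and `i`:
if `y_i = 0` then the probability `Σ_λ μ_y(λ)·f_i(λ)` of outcome `+1` for measurement `i`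
is at least `p`, and if `y_i = 1` then the probability `Σ_λ μ_y(λ)·(1 − f_i(λ))` of outcome
`−1` is at least `p`.  Then `k·(1 − H₂(p)) ≤ log₂|Λ|`. -/
theorem random_access_code_bound
    (Λ : Type) [Fintype Λ] [Nonempty Λ] (k : ℕ) (hk : 1 ≤ k)
    (p : ℝ) (hp : p ∈ Set.Icc (1 / 2 : ℝ) 1)
    (μ : (Fin k → Bool) → Λ → ℝ)
    (hμ0 : ∀ (y : Fin k → Bool) (l : Λ), 0 ≤ μ y l)
    (hμ1 : ∀ y : Fin k → Bool, ∑ l : Λ, μ y l = 1)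
    (f : Fin k → Λ → ℝ)
    (hf : ∀ (i : Fin k) (l : Λ), f i l ∈ Set.Icc (0 : ℝ) 1)
    (h0 : ∀ (y : Fin k → Bool) (i : Fin k), y i = false → p ≤ ∑ l : Λ, μ y l * f i l)
    (h1 : ∀ (y : Fin k → Bool) (i : Fin k), y i = true → p ≤ ∑ l : Λ, μ y l * (1 - f i l)) :
    (k : ℝ) * (1 - binEntropy2 p) ≤ Real.logb 2 (Fintype.card Λ) := by
  have h : ∀ (y : Fin k → Bool) (i : Fin k), p ≤ ∑ l : Λ, μ y l * racG f i (y i) l := by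
    intro y i
    cases hy : y i with
    | false => simpa [racG] using h0 y i hy
    | true => simpa [racG] using h1 y i hy
  have main : (k : ℝ) * (Real.log 2 - Real.binEntropy p) ≤ Real.log (Fintype.card Λ) := by
    rcases hp.2.lt_or_eq with hlt | rfl
    · exact rac_aux Λ k p hp.1 hlt μ hμ0 hμ1 f hf h
    · have hc : Continuous (fun r : ℝ => (k : ℝ) * (Real.log 2 - Real.binEntropy r)) := by
        fun_prop
      have ht := (hc.tendsto 1).mono_left (nhdsWithin_le_nhds (s := Set.Iio 1))
      refine le_of_tendsto ht ?_
      have : Set.Ico (1 / 2 : ℝ) 1 ∈ nhdsWithin (1 : ℝ) (Set.Iio 1) :=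
        Ico_mem_nhdsLT (by norm_num)
      filter_upwards [this] with r hr
      exact rac_aux Λ k r hr.1 hr.2 μ hμ0 hμ1 f hf (fun y i => hr.2.le.trans (h y i))
  have h2 : 0 < Real.log 2 := Real.log_pos (by norm_num)
  have e : (k : ℝ) * (1 - binEntropy2 p)
      = (k : ℝ) * (Real.log 2 - Real.binEntropy p) / Real.log 2 := by
    simp only [binEntropy2, Real.binEntropy, Real.logb, Real.log_inv]
    field_simp
    ring
  rw [e, Real.logb]
  exact div_le_div_of_nonneg_right main h2.le
end

section
/- Let (Ω, P) be a finite probability space, k ≥ 1, Λ a finite nonempty set, and p ∈ [1/2, 1]. Let Y : Ω → {0,1}^k be uniformly distributed, X : Ω → Λ, and Z : Ω → {0,1}^k be random variables such that Y and Z are conditionally independent given X (Markov chain Y → X → Z), and such that P[ Z_i = Y_i ] ≥ p for every i ∈ {1,…,k}. Then k·(1 − H₂(p)) ≤ log₂|Λ|, where H₂(p) = −p·log₂ p − (1−p)·log₂(1−p) is the binary entropy function (with H₂(0) = H₂(1) = 0). -/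
open Classical in
/-- The probability of the event `e` in the finite probability space with weights `P`. -/
noncomputable def prFin {Ω : Type} [Fintype Ω] (P : Ω → ℝ) (e : Ω → Prop) : ℝ :=
  ∑ ω : Ω, if e ω then P ω else 0

/-- Weight of the trial channel. -/
noncomputable def racW {k : ℕ} (p : ℝ) (y z : Fin k → Bool) : ℝ :=
  ∏ i, if z i = y i then p else 1 - p

theorem racW_sum {k : ℕ} (p : ℝ) (z : Fin k → Bool) : ∑ y, racW p y z = 1 := by
  have h := Finset.prod_univ_sum (fun _ : Fin k => (Finset.univ : Finset Bool))
    (fun i b => if z i = b then p else 1 - p)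
  rw [Fintype.piFinset_univ] at h
  unfold racW
  rw [← h]
  apply Finset.prod_eq_one
  intro i _
  cases z i <;> simp

theorem prFin_nonneg {Ω : Type} [Fintype Ω] (P : Ω → ℝ) (hP0 : ∀ ω, 0 ≤ P ω) (e : Ω → Prop) :
    0 ≤ prFin P e := by
  unfold prFin
  apply Finset.sum_nonneg
  intro ω _
  split_ifs
  · exact hP0 ω
  · exact le_rfl

theorem prFin_mono {Ω : Type} [Fintype Ω] (P : Ω → ℝ) (hP0 : ∀ ω, 0 ≤ P ω) (e f : Ω → Prop)
    (h : ∀ ω, e ω → f ω) : prFin P e ≤ prFin P f := by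
  unfold prFin
  apply Finset.sum_le_sum
  intro ω _
  by_cases he : e ω
  · simp [he, h ω he]
  · by_cases hf : f ω <;> simp [he, hf, hP0 ω]

theorem rac_sum_z {Ω : Type} [Fintype Ω] (P : Ω → ℝ) {α : Type} [Fintype α]
    (Z : Ω → α) (e : Ω → Prop) : ∑ z, prFin P (fun ω => Z ω = z ∧ e ω) = prFin P e := by
  classical
  unfold prFin
  rw [Finset.sum_comm]
  apply Finset.sum_congr rfl
  intro ω _
  rw [Finset.sum_eq_single (Z ω)]
  · simp
  · intro b _ hb
    simp [Ne.symm hb]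
  · simp

theorem rac_expand {Ω : Type} [Fintype Ω] (P : Ω → ℝ) {α β : Type} [Fintype α] [Fintype β]
    (Y Z : Ω → α) (X : Ω → β) (V : α → α → ℝ) :
    ∑ ω, P ω * V (Y ω) (Z ω)
      = ∑ x, ∑ z, ∑ y, prFin P (fun ω => Y ω = y ∧ Z ω = z ∧ X ω = x) * V y z := by
  classical
  have h : ∀ ω, P ω * V (Y ω) (Z ω) = ∑ x, ∑ z, ∑ y,
      (if (Y ω = y ∧ Z ω = z ∧ X ω = x) then P ω else 0) * V y z := by
    intro ω
    rw [Finset.sum_eq_single (X ω), Finset.sum_eq_single (Z ω), Finset.sum_eq_single (Y ω)]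
    · simp
    · intro b _ hb
      simp [Ne.symm hb]
    · simp
    · intro b _ hb
      simp [Ne.symm hb]
    · simp
    · intro b _ hb
      simp [Ne.symm hb]
    · simp
  simp_rw [h]
  rw [Finset.sum_comm]
  refine Finset.sum_congr rfl fun x _ => ?_
  rw [Finset.sum_comm]
  refine Finset.sum_congr rfl fun z _ => ?_
  rw [Finset.sum_comm]
  refine Finset.sum_congr rfl fun y _ => ?_
  rw [← Finset.sum_mul]
  congr 1
  unfold prFin
  refine Finset.sum_congr rfl fun ω _ => ?_
  congr

theorem binEntropy2_eq (p : ℝ) : binEntropy2 p = Real.binEntropy p / Real.log 2 := by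
  unfold binEntropy2 Real.binEntropy Real.logb
  rw [Real.log_inv, Real.log_inv]
  ring

theorem rac_log {Ω : Type} [Fintype Ω] (P : Ω → ℝ)
    (hP0 : ∀ ω : Ω, 0 ≤ P ω) (hP1 : ∑ ω : Ω, P ω = 1)
    (k : ℕ) (Λ : Type) [Fintype Λ] [Nonempty Λ]
    (p : ℝ) (hp : 1 / 2 ≤ p) (hp1 : p < 1)
    (Y : Ω → (Fin k → Bool)) (X : Ω → Λ) (Z : Ω → (Fin k → Bool))
    (hunif : ∀ y : Fin k → Bool, prFin P (fun ω => Y ω = y) = (1 / 2 : ℝ) ^ k)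
    (hmarkov : ∀ (y : Fin k → Bool) (z : Fin k → Bool) (x : Λ),
      0 < prFin P (fun ω => X ω = x) →
      prFin P (fun ω => Y ω = y ∧ Z ω = z ∧ X ω = x) / prFin P (fun ω => X ω = x) =
        (prFin P (fun ω => Y ω = y ∧ X ω = x) / prFin P (fun ω => X ω = x)) *
          (prFin P (fun ω => Z ω = z ∧ X ω = x) / prFin P (fun ω => X ω = x)))
    (hrec : ∀ i : Fin k, p ≤ prFin P (fun ω => Z ω i = Y ω i)) :
    (k : ℝ) * (1 - binEntropy2 p) ≤ Real.logb 2 (Fintype.card Λ) := by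
  classical
  have hp0 : 0 < p := by linarith
  have hq0 : 0 < 1 - p := by linarith
  have hWpos : ∀ y z : Fin k → Bool, 0 < racW p y z := by
    intro y z
    unfold racW
    apply Finset.prod_pos
    intro i _
    split_ifs <;> assumption
  have h1 : -(k * Real.binEntropy p) ≤ ∑ ω, P ω * Real.log (racW p (Y ω) (Z ω)) := by
    have e : ∀ ω, P ω * Real.log (racW p (Y ω) (Z ω)) =
        ∑ i, P ω * (if Z ω i = Y ω i then Real.log p else Real.log (1 - p)) := by
      intro ω
      unfold racW
      rw [Real.log_prod, Finset.mul_sum]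
      · refine Finset.sum_congr rfl fun i _ => ?_
        split_ifs <;> rfl
      · intro i _
        split_ifs
        · exact hp0.ne'
        · exact hq0.ne'
    simp_rw [e]
    rw [Finset.sum_comm]
    have e2 : ∀ i : Fin k, -Real.binEntropy p ≤
        ∑ ω, P ω * (if Z ω i = Y ω i then Real.log p else Real.log (1 - p)) := by
      intro i
      have e3 : ∑ ω, P ω * (if Z ω i = Y ω i then Real.log p else Real.log (1 - p)) =
          prFin P (fun ω => Z ω i = Y ω i) * (Real.log p - Real.log (1 - p))
            + Real.log (1 - p) := by
        have hL : ∀ L : ℝ, L = ∑ ω, P ω * L := by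
          intro L
          rw [← Finset.sum_mul, hP1, one_mul]
        symm
        have : ∀ A B C : ℝ, A = B + ∑ ω, P ω * C → B + C = A := by
          intro A B C h
          rw [h, ← hL C]
        apply this
        unfold prFin
        rw [Finset.sum_mul, ← Finset.sum_add_distrib]
        refine Finset.sum_congr rfl fun ω _ => ?_
        by_cases hh : Z ω i = Y ω i
        · simp [hh]; ring
        · simp [hh]
      rw [e3]
      have hl : Real.log (1 - p) ≤ Real.log p := Real.log_le_log hq0 (by linarith)
      have := mul_le_mul_of_nonneg_right (hrec i) (sub_nonneg.2 hl)
      unfold Real.binEntropy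
      rw [Real.log_inv, Real.log_inv]
      linarith
    calc -(k * Real.binEntropy p) = ∑ i : Fin k, -Real.binEntropy p := by simp
      _ ≤ _ := Finset.sum_le_sum fun i _ => e2 i
  have h2 : ∑ ω, P ω * Real.log (racW p (Y ω) (Z ω)) ≤
      Real.log (∑ ω, P ω * racW p (Y ω) (Z ω)) := by
    have := strictConcaveOn_log_Ioi.concaveOn.le_map_sum (t := Finset.univ) (w := P)
      (p := fun ω => racW p (Y ω) (Z ω)) (fun ω _ => hP0 ω) hP1 (fun ω _ => hWpos _ _)
    simpa only [smul_eq_mul] using this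
  have h3 : ∑ ω, P ω * racW p (Y ω) (Z ω) ≤ (Fintype.card Λ : ℝ) * (1 / 2) ^ k := by
    rw [rac_expand P Y Z X (racW p)]
    have : ∀ x : Λ, ∑ z, ∑ y, prFin P (fun ω => Y ω = y ∧ Z ω = z ∧ X ω = x) * racW p y z
        ≤ (1 / 2 : ℝ) ^ k := by
      intro x
      rcases (prFin_nonneg P hP0 (fun ω => X ω = x)).eq_or_lt with h0 | h0
      · have hz : ∀ y z, prFin P (fun ω => Y ω = y ∧ Z ω = z ∧ X ω = x) = 0 := by
          intro y z
          apply le_antisymm _ (prFin_nonneg P hP0 _)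
          rw [h0]
          exact prFin_mono P hP0 _ _ fun ω h => h.2.2
        simp [hz]
      · set q := prFin P (fun ω => X ω = x) with hq
        have hb : ∀ y z, prFin P (fun ω => Y ω = y ∧ Z ω = z ∧ X ω = x) ≤
            (1 / 2 : ℝ) ^ k * (prFin P (fun ω => Z ω = z ∧ X ω = x) / q) := by
          intro y z
          have hm := hmarkov y z x h0
          have he : prFin P (fun ω => Y ω = y ∧ Z ω = z ∧ X ω = x) =
              prFin P (fun ω => Y ω = y ∧ X ω = x) *
                (prFin P (fun ω => Z ω = z ∧ X ω = x) / q) := by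
            rw [div_eq_iff h0.ne'] at hm
            rw [hm, ← hq]
            field_simp
          rw [he, ← hunif y]
          apply mul_le_mul_of_nonneg_right
          · exact prFin_mono P hP0 _ _ fun ω h => h.1
          · exact div_nonneg (prFin_nonneg P hP0 _) h0.le
        calc _ ≤ ∑ z, ∑ y, ((1 / 2 : ℝ) ^ k * (prFin P (fun ω => Z ω = z ∧ X ω = x) / q))
                * racW p y z :=
              Finset.sum_le_sum fun z _ => Finset.sum_le_sum fun y _ =>
                mul_le_mul_of_nonneg_right (hb y z) (hWpos y z).le
          _ = (1 / 2 : ℝ) ^ k := by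
              simp_rw [← Finset.mul_sum, racW_sum, mul_one]
              rw [← Finset.mul_sum, ← Finset.sum_div, rac_sum_z P Z (fun ω => X ω = x), ← hq,
                div_self h0.ne', mul_one]
    calc _ ≤ ∑ x : Λ, (1 / 2 : ℝ) ^ k := Finset.sum_le_sum fun x _ => this x
      _ = _ := by simp
  have hpos : 0 < ∑ ω, P ω * racW p (Y ω) (Z ω) := by
    apply lt_of_le_of_ne
    · exact Finset.sum_nonneg fun ω _ => mul_nonneg (hP0 ω) (hWpos _ _).le
    · intro h
      have h' := (Finset.sum_eq_zero_iff_of_nonneg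
        (fun ω _ => mul_nonneg (hP0 ω) (hWpos (Y ω) (Z ω)).le)).1 h.symm
      have : ∑ ω, P ω = 0 := Finset.sum_eq_zero fun ω hω =>
        (mul_eq_zero.1 (h' ω hω)).resolve_right (hWpos _ _).ne'
      linarith
  have h4 := Real.log_le_log hpos h3
  have hc : (0 : ℝ) < Fintype.card Λ := by exact_mod_cast Fintype.card_pos
  rw [Real.log_mul hc.ne' (by positivity), Real.log_pow, one_div, Real.log_inv] at h4
  have hl2 : 0 < Real.log 2 := Real.log_pos (by norm_num)
  rw [binEntropy2_eq, Real.logb, le_div_iff₀ hl2]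
  have : (k : ℝ) * (1 - Real.binEntropy p / Real.log 2) * Real.log 2
      = k * Real.log 2 - k * Real.binEntropy p := by
    field_simp
  rw [this]
  linarith

/-- **Probabilistic core of the random access code theorem.**  Let `(Ω, P)` be a finite
probability space, `Y : Ω → {0,1}^k` uniformly distributed, `X : Ω → Λ` with `Λ` finite
and nonempty, and `Z : Ω → {0,1}^k`, such that `Y` and `Z` are conditionally independent
given `X` (Markov chain `Y → X → Z`), and `P[Z_i = Y_i] ≥ p` for each `i`, where
`p ∈ [1/2, 1]`.  Then `k·(1 − H₂(p)) ≤ log₂|Λ|`. -/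
theorem random_access_code_markov
    (Ω : Type) [Fintype Ω] (P : Ω → ℝ)
    (hP0 : ∀ ω : Ω, 0 ≤ P ω) (hP1 : ∑ ω : Ω, P ω = 1)
    (k : ℕ) (hk : 1 ≤ k)
    (Λ : Type) [Fintype Λ] [Nonempty Λ]
    (p : ℝ) (hp : p ∈ Set.Icc (1 / 2 : ℝ) 1)
    (Y : Ω → (Fin k → Bool)) (X : Ω → Λ) (Z : Ω → (Fin k → Bool))
    -- `Y` is uniformly distributed on `{0,1}^k`:
    (hunif : ∀ y : Fin k → Bool, prFin P (fun ω => Y ω = y) = (1 / 2 : ℝ) ^ k)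
    -- `Y` and `Z` are conditionally independent given `X` (Markov chain `Y → X → Z`):
    (hmarkov : ∀ (y : Fin k → Bool) (z : Fin k → Bool) (x : Λ),
      0 < prFin P (fun ω => X ω = x) →
      prFin P (fun ω => Y ω = y ∧ Z ω = z ∧ X ω = x) / prFin P (fun ω => X ω = x) =
        (prFin P (fun ω => Y ω = y ∧ X ω = x) / prFin P (fun ω => X ω = x)) *
          (prFin P (fun ω => Z ω = z ∧ X ω = x) / prFin P (fun ω => X ω = x)))
    -- each bit is recovered with probability at least `p`:
    (hrec : ∀ i : Fin k, p ≤ prFin P (fun ω => Z ω i = Y ω i)) :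
    (k : ℝ) * (1 - binEntropy2 p) ≤ Real.logb 2 (Fintype.card Λ) := by
  rcases hp.2.lt_or_eq with h | h
  · exact rac_log P hP0 hP1 k Λ p hp.1 h Y X Z hunif hmarkov hrec
  · subst h
    have hc : Continuous fun q : ℝ => (k : ℝ) * (1 - binEntropy2 q) := by
      simp_rw [binEntropy2_eq]
      have := Real.binEntropy_continuous
      fun_prop
    have ht := (hc.tendsto 1).mono_left (nhdsWithin_le_nhds (s := Set.Iio 1))
    refine le_of_tendsto ht ?_
    filter_upwards [Ioo_mem_nhdsLT (show (1 / 2 : ℝ) < 1 by norm_num)] with q hq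
    exact rac_log P hP0 hP1 k Λ q hq.1.le hq.2 Y X Z hunif hmarkov
      fun i => hq.2.le.trans (hrec i)
end

section
/- There exists a universal constant C > 0 such that the following holds. Let Λ be a finite nonempty set, M any set, and f : Λ × M → [0,1]. Let V be the class of functions M → [0,1] of the form g_q(E) = Σ_{λ∈Λ} q(λ)·f(λ,E), where q ranges over all probability distributions on Λ. Then for every γ ∈ (0, 1/2], every subset {E₁,…,E_k} ⊆ M that is γ-fat-shattered by V satisfies k ≤ C·log₂|Λ| / γ²; i.e., the γ-fat-shattering dimension of V is O(log₂|Λ| / γ²). -/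
/-- A finite family `E : Fin k → M` (a set `{E₁,…,E_k} ⊆ M` when `E` is injective) is
`γ`-fat-shattered by the function class `V` if there are reals `α₁,…,α_k` such that for
every `B ⊆ {1,…,k}` there is `g ∈ V` with `g(E_i) ≥ α_i + γ` for `i ∈ B` and
`g(E_i) ≤ α_i − γ` for `i ∉ B`. -/
def FatShatters {M : Type} (V : Set (M → ℝ)) (γ : ℝ) {k : ℕ} (E : Fin k → M) : Prop :=
  ∃ α : Fin k → ℝ, ∀ B : Finset (Fin k), ∃ g ∈ V,
    (∀ i ∈ B, α i + γ ≤ g (E i)) ∧ (∀ i ∉ B, g (E i) ≤ α i - γ)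

/-- The class of functions `M → [0,1]` induced by the preparations of an ontological model
with finite ontic space `Λ` and outcome probabilities `f : Λ × M → [0,1]`:  all functions
of the form `g_q(E) = Σ_λ q(λ)·f(λ,E)` with `q` a probability distribution on `Λ`. -/
def prepClass (Λ M : Type) [Fintype Λ] (f : Λ → M → ℝ) : Set (M → ℝ) :=
  {g | ∃ q : Λ → ℝ, (∀ l : Λ, 0 ≤ q l) ∧ (∑ l : Λ, q l = 1) ∧
    g = fun E => ∑ l : Λ, q l * f l E}

/-- Per-pattern step: a preparation that realises the pattern `B` yields an ontic state
with large signed sum. -/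
lemma exists_state_large {Λ : Type} [Fintype Λ] [Nonempty Λ] {k : ℕ} (c : Λ → Fin k → ℝ)
    (γ : ℝ) (s : Fin k → ℝ) (q : Λ → ℝ) (hq : ∀ l, 0 ≤ q l) (hq1 : ∑ l, q l = 1)
    (h : ∀ i, γ ≤ s i * ∑ l, q l * c l i) :
    ∃ l, k * γ ≤ ∑ i, s i * c l i := by
  obtain ⟨m, hm⟩ := Finite.exists_max (fun l => ∑ i, s i * c l i)
  refine ⟨m, ?_⟩
  calc (k : ℝ) * γ = ∑ _i : Fin k, γ := by simp
    _ ≤ ∑ i, s i * ∑ l, q l * c l i := Finset.sum_le_sum fun i _ => h i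
    _ = ∑ l, q l * ∑ i, s i * c l i := by
        simp only [Finset.mul_sum]
        rw [Finset.sum_comm]
        refine Finset.sum_congr rfl fun l _ => Finset.sum_congr rfl fun i _ => by ring
    _ ≤ ∑ l, q l * ∑ i, s i * c m i :=
        Finset.sum_le_sum fun l _ => mul_le_mul_of_nonneg_left (hm l) (hq l)
    _ = _ := by rw [← Finset.sum_mul, hq1, one_mul]

/-- Rademacher moment generating function bound. -/
lemma rademacher_mgf {k : ℕ} (c : Fin k → ℝ) (hc : ∀ i, |c i| ≤ 1) (t : ℝ) :
    ∑ B : Finset (Fin k), Real.exp (t * ∑ i, (if i ∈ B then 1 else -1) * c i)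
      ≤ 2 ^ k * Real.exp (k * (t ^ 2 / 2)) := by
  have h1 : ∑ B : Finset (Fin k), Real.exp (t * ∑ i, (if i ∈ B then 1 else -1) * c i)
      = ∏ i, (Real.exp (t * c i) + Real.exp (-(t * c i))) := by
    rw [Finset.prod_add, Finset.powerset_univ]
    refine Finset.sum_congr rfl fun B _ => ?_
    rw [← Finset.compl_eq_univ_sdiff, Finset.mul_sum, Real.exp_sum,
      ← Finset.prod_mul_prod_compl B]
    congr 1
    · refine Finset.prod_congr rfl fun i hi => ?_
      simp [hi]
    · refine Finset.prod_congr rfl fun i hi => ?_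
      simp [Finset.mem_compl.1 hi]
  rw [h1]
  calc _ ≤ ∏ _i : Fin k, (2 * Real.exp (t ^ 2 / 2)) := by
        refine Finset.prod_le_prod (fun i _ => by positivity) fun i _ => ?_
        have h2 := Real.cosh_le_exp_half_sq (t * c i)
        rw [Real.cosh_eq] at h2
        have h3 : Real.exp ((t * c i) ^ 2 / 2) ≤ Real.exp (t ^ 2 / 2) := by
          apply Real.exp_le_exp.2
          have : c i ^ 2 ≤ 1 := (sq_le_one_iff_abs_le_one _).2 (hc i)
          nlinarith [sq_nonneg t]
        linarith
    _ = _ := by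
        rw [Finset.prod_const, Finset.card_univ, Fintype.card_fin, mul_pow, ← Real.exp_nat_mul]

/-- **Fat-shattering dimension of preparations of an efficient ontological model.**
There is a universal constant `C > 0` such that: for every finite nonempty ontic space
`Λ`, any set of measurements `M`, and `f : Λ × M → [0,1]`, every `γ ∈ (0, 1/2]` and every
subset `{E₁,…,E_k} ⊆ M` that is `γ`-fat-shattered by the class of preparation functions
satisfies `k ≤ C·log₂|Λ|/γ²`. -/
theorem fat_shattering_dimension_of_preparations :
    ∃ C : ℝ, 0 < C ∧
      ∀ (Λ : Type) (_ : Fintype Λ), Nonempty Λ →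
      ∀ (M : Type) (f : Λ → M → ℝ),
        (∀ (l : Λ) (E : M), f l E ∈ Set.Icc (0 : ℝ) 1) →
      ∀ γ : ℝ, γ ∈ Set.Ioc (0 : ℝ) (1 / 2) →
      ∀ (k : ℕ) (E : Fin k → M), Function.Injective E →
        FatShatters (prepClass Λ M f) γ E →
        (k : ℝ) ≤ C * Real.logb 2 (Fintype.card Λ) / γ ^ 2 := by
  refine ⟨2, by norm_num, ?_⟩
  intro Λ _ hne M f hf γ hγ k E _ hsh
  obtain ⟨hγ0, -⟩ := hγ
  obtain ⟨α, hα⟩ := hsh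
  have hg : ∀ g ∈ prepClass Λ M f, ∀ e, 0 ≤ g e ∧ g e ≤ 1 := by
    rintro g ⟨q, hq, hq1, rfl⟩ e
    refine ⟨Finset.sum_nonneg fun l _ => mul_nonneg (hq l) (hf l e).1, ?_⟩
    rw [← hq1]
    exact Finset.sum_le_sum fun l _ => mul_le_of_le_one_right (hq l) (hf l e).2
  have hα01 : ∀ i, 0 ≤ α i ∧ α i ≤ 1 := by
    intro i
    obtain ⟨g, hgV, h1, -⟩ := hα Finset.univ
    obtain ⟨g', hgV', -, h2⟩ := hα ∅
    have a1 := h1 i (Finset.mem_univ i)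
    have a2 := h2 i (Finset.notMem_empty i)
    have b1 := hg g hgV (E i)
    have b2 := hg g' hgV' (E i)
    constructor <;> linarith
  let c : Λ → Fin k → ℝ := fun l i => f l (E i) - α i
  have hc : ∀ l i, |c l i| ≤ 1 := by
    intro l i
    have a := hf l (E i)
    have b := hα01 i
    rw [abs_le]
    constructor <;> simp only [c] <;> linarith [a.1, a.2]
  have key : ∀ B : Finset (Fin k), Real.exp (γ * (k * γ)) ≤
      ∑ l, Real.exp (γ * ∑ i, (if i ∈ B then 1 else -1) * c l i) := by
    intro B
    obtain ⟨g, ⟨q, hq, hq1, rfl⟩, h1, h2⟩ := hα B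
    obtain ⟨m, hm⟩ := exists_state_large c γ (fun i => if i ∈ B then 1 else -1) q hq hq1 (by
      intro i
      have e : ∑ l, q l * c l i = ∑ l, q l * f l (E i) - α i := by
        simp only [c, mul_sub, Finset.sum_sub_distrib, ← Finset.sum_mul, hq1, one_mul]
      rw [e]
      by_cases hi : i ∈ B
      · have := h1 i hi
        simp only [hi, if_true]
        linarith
      · have := h2 i hi
        simp only [hi, if_false]
        linarith)
    refine le_trans (Real.exp_le_exp.2 (mul_le_mul_of_nonneg_left hm hγ0.le)) ?_
    exact Finset.single_le_sum
      (f := fun l => Real.exp (γ * ∑ i, (if i ∈ B then 1 else -1) * c l i))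
      (fun l _ => (Real.exp_pos _).le) (Finset.mem_univ m)
  have tot : (2 : ℝ) ^ k * Real.exp (γ * (k * γ)) ≤
      2 ^ k * (Fintype.card Λ * Real.exp (k * (γ ^ 2 / 2))) := by
    calc (2 : ℝ) ^ k * Real.exp (γ * (k * γ))
        = ∑ _B : Finset (Fin k), Real.exp (γ * (k * γ)) := by simp
      _ ≤ _ := Finset.sum_le_sum fun B _ => key B
      _ = ∑ l, ∑ B : Finset (Fin k),
            Real.exp (γ * ∑ i, (if i ∈ B then 1 else -1) * c l i) := Finset.sum_comm
      _ ≤ ∑ _l : Λ, 2 ^ k * Real.exp (k * (γ ^ 2 / 2)) :=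
            Finset.sum_le_sum fun l _ => rademacher_mgf (c l) (hc l) γ
      _ = _ := by
            simp only [Finset.sum_const, Finset.card_univ, nsmul_eq_mul]
            ring
  have tot2 := le_of_mul_le_mul_left tot (by positivity)
  have hcard : (1 : ℝ) ≤ Fintype.card Λ := by exact_mod_cast Fintype.card_pos
  have hlog := Real.log_le_log (Real.exp_pos _) tot2
  rw [Real.log_exp, Real.log_mul (by positivity) (Real.exp_pos _).ne', Real.log_exp] at hlog
  have hL : Real.log (Fintype.card Λ) ≤ Real.logb 2 (Fintype.card Λ) := by
    rw [Real.logb, le_div_iff₀ (Real.log_pos (by norm_num))]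
    exact mul_le_of_le_one_right (Real.log_nonneg hcard)
      (by linarith [Real.log_two_lt_d9])
  rw [le_div_iff₀ (by positivity)]
  nlinarith
end

section
/- Let n ≥ 2 and L ≥ 1 be natural numbers and let ψ : ({0,1})^n → ℂ be an n-qubit state vector (an arbitrary function on bit strings of length n). For each cut j ∈ {1,…,n−1}, let M_j be the 2^j × 2^{n−j} complex matrix (matricization) defined by M_j((x₁,…,x_j),(x_{j+1},…,x_n)) = ψ(x₁,…,x_n). Suppose rank(M_j) ≤ L for every j (i.e. ψ is L-entangled across every contiguous bipartition). Then ψ admits a matrix-product (tree-like Schmidt) representation with bond dimension L: there exist functions a₁ : {0,1} × {1,…,L} → ℂ, a_j : {0,1} × {1,…,L} × {1,…,L} → ℂ for 2 ≤ j ≤ n−1, and a_n : {0,1} × {1,…,L} → ℂ, such that for every (x₁,…,x_n) ∈ {0,1}^n, ψ(x₁,…,x_n) = Σ_{j₁,…,j_{n−1} ∈ {1,…,L}} a₁(x₁, j₁) · a₂(x₂, j₁, j₂) ⋯ a_{n−1}(x_{n−1}, j_{n−2}, j_{n−1}) · a_n(x_n, j_{n−1}). -/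
/-- The matricization of an `n`-qubit state vector `ψ : {0,1}^n → ℂ` across the cut
`(1,…,j | j+1,…,n)`: the `2^j × 2^{n−j}` matrix with
`M_j((x₁,…,x_j),(x_{j+1},…,x_n)) = ψ(x₁,…,x_n)`.  Its rank is the Schmidt rank of `ψ`
across that bipartition. -/
noncomputable def matricize {n : ℕ} (ψ : (Fin n → Bool) → ℂ) (j : ℕ) (hj : j ≤ n) :
    Matrix (Fin j → Bool) (Fin (n - j) → Bool) ℂ :=
  Matrix.of fun u v => ψ fun i =>
    if h : (i : ℕ) < j then u ⟨(i : ℕ), h⟩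
    else v ⟨(i : ℕ) - j, by have := i.isLt; omega⟩

/-- Rank factorization through the column space. -/
lemma exists_factor_of_rank_le {m n : Type*} [Fintype m] [Fintype n] [DecidableEq n]
    (M : Matrix m n ℂ) (L : ℕ) (h : M.rank ≤ L) :
    ∃ (C : Matrix n (Fin L) ℂ) (B : Matrix (Fin L) n ℂ), M = M * C * B := by
  obtain ⟨s, hs⟩ := M.mulVecLin.rangeRestrict.exists_rightInverse_of_surjective
    M.mulVecLin.range_rangeRestrict
  obtain ⟨ι, hι⟩ : ∃ ι : LinearMap.range M.mulVecLin →ₗ[ℂ] (Fin L → ℂ),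
      Function.Injective ι := by
    have h' : Module.finrank ℂ (LinearMap.range M.mulVecLin) ≤ L := h
    let b := Module.finBasis ℂ (LinearMap.range M.mulVecLin)
    refine ⟨Function.ExtendByZero.linearMap ℂ (Fin.castLE h') ∘ₗ b.equivFun.toLinearMap, ?_⟩
    intro x y hxy
    apply b.equivFun.injective
    funext i
    have h3 := congrFun hxy (Fin.castLE h' i)
    simpa [(Fin.castLE_injective h').extend_apply] using h3
  obtain ⟨p, hp⟩ := ι.exists_leftInverse_of_injective (LinearMap.ker_eq_bot.2 hι)
  refine ⟨LinearMap.toMatrix' (s ∘ₗ p),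
    LinearMap.toMatrix' (ι ∘ₗ M.mulVecLin.rangeRestrict), ?_⟩
  apply Matrix.toLin'.injective
  rw [Matrix.toLin'_mul, Matrix.toLin'_mul, Matrix.toLin'_toMatrix', Matrix.toLin'_toMatrix']
  ext1 i
  ext1
  have h1 := fun y => LinearMap.congr_fun hp y
  have h2 := fun y => congrArg Subtype.val (LinearMap.congr_fun hs y)
  simp only [LinearMap.comp_apply, LinearMap.id_apply] at h1 h2 ⊢
  rw [h1]
  exact (h2 (M.mulVecLin.rangeRestrict _)).symm

/-- Iterated transfer matrices as a sum over paths. -/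
lemma sum_paths {L : ℕ} (m : ℕ) (v : ℕ → Fin L → ℂ) (F : ℕ → Fin L → Fin L → ℂ)
    (hv : ∀ t < m, ∀ k, v (t + 1) k = ∑ l, v t l * F (t + 1) l k) (g : Fin L → ℂ) :
    ∑ k, v m k * g k = ∑ j : Fin (m + 1) → Fin L,
      v 0 (j 0) * (∏ t : Fin m, F (t + 1) (j t.castSucc) (j t.succ)) * g (j (Fin.last m)) := by
  induction m generalizing g with
  | zero =>
    rw [← (Equiv.funUnique (Fin 1) (Fin L)).symm.sum_comp]
    simp
  | succ m ih =>
    have h1 : ∑ k, v (m + 1) k * g k = ∑ l, v m l * ∑ k, F (m + 1) l k * g k := by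
      simp_rw [hv m (Nat.lt_succ_self m), Finset.sum_mul, Finset.mul_sum]
      rw [Finset.sum_comm]
      simp only [mul_assoc]
    rw [h1, ih (fun t ht => hv t (by omega)),
      ← (Fin.snocEquiv (fun _ : Fin (m + 2) => Fin L)).sum_comp, Fintype.sum_prod_type,
      Finset.sum_comm]
    refine Finset.sum_congr rfl fun j _ => ?_
    rw [Finset.mul_sum]
    refine Finset.sum_congr rfl fun k _ => ?_
    have h0 : (Fin.snoc j k : Fin (m + 2) → Fin L) 0 = j 0 := by
      rw [← Fin.castSucc_zero, Fin.snoc_castSucc (α := fun _ => Fin L)]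
    simp only [Fin.snocEquiv, Equiv.coe_fn_mk]
    rw [Fin.prod_univ_castSucc]
    simp only [Fin.succ_castSucc, Fin.succ_last, Fin.snoc_castSucc, Fin.snoc_last, h0]
    simp [mul_assoc]

lemma matricize_split {n : ℕ} (ψ : (Fin n → Bool) → ℂ) (j : ℕ) (hj : j + 1 ≤ n)
    (x : Fin n → Bool) (v : Fin (n - (j + 1)) → Bool) :
    matricize ψ (j + 1) hj (fun i => x ⟨i, by omega⟩) v =
    matricize ψ j (by omega) (fun i => x ⟨i, by omega⟩)
      (fun i => if h : (i : ℕ) = 0 then x ⟨j, by omega⟩ else v ⟨i - 1, by omega⟩) := by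
  simp only [matricize, Matrix.of_apply]
  congr 1
  funext i
  rcases lt_trichotomy (i : ℕ) j with h | h | h
  · simp [h, Nat.lt_succ_of_lt h]
  · subst h; simp
  · have h1 : ¬ (i : ℕ) < j + 1 := by omega
    have h2 : ¬ (i : ℕ) < j := by omega
    have h3 : ¬ (i : ℕ) - j = 0 := by omega
    simp only [h1, h2, h3, dite_false]
    congr 1

/-- **Matrix-product representation of slightly entangled states** (Vidal/Jozsa, Eq. (4)
of the paper).  Let `n ≥ 2`, `L ≥ 1`, and let `ψ : {0,1}^n → ℂ` be an `n`-qubit state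
vector whose Schmidt rank across every contiguous bipartition `(1,…,j | j+1,…,n)` is at
most `L`.  Then `ψ` admits a matrix-product representation with bond dimension `L`:
there are tensors `a₁(x₁, j₁)`, `a_t(x_t, j_{t−1}, j_t)` for `2 ≤ t ≤ n−1`, and
`a_n(x_n, j_{n−1})` with
`ψ(x₁,…,x_n) = Σ_{j₁,…,j_{n−1}} a₁(x₁,j₁)·a₂(x₂,j₁,j₂)⋯a_{n−1}(x_{n−1},j_{n−2},j_{n−1})·a_n(x_n,j_{n−1})`. -/
theorem matrix_product_representation_of_L_entangled
    (n L : ℕ) (hn : 2 ≤ n) (hL : 1 ≤ L)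
    (ψ : (Fin n → Bool) → ℂ)
    (hrank : ∀ (j : ℕ) (_ : 1 ≤ j) (hjn : j < n), (matricize ψ j hjn.le).rank ≤ L) :
    ∃ (afirst : Bool → Fin L → ℂ)
      (amid : Fin n → Bool → Fin L → Fin L → ℂ)
      (alast : Bool → Fin L → ℂ),
      ∀ x : Fin n → Bool,
        ψ x =
          ∑ j : Fin (n - 1) → Fin L,
            afirst (x ⟨0, by omega⟩) (j ⟨0, by omega⟩) *
            (∏ t : Fin n,
              if h : 1 ≤ (t : ℕ) ∧ (t : ℕ) < n - 1 then
                amid t (x t) (j ⟨(t : ℕ) - 1, by omega⟩) (j ⟨(t : ℕ), by omega⟩)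
              else 1) *
            alast (x ⟨n - 1, by omega⟩) (j ⟨n - 2, by omega⟩) := by
  obtain ⟨m, rfl⟩ : ∃ m, n = m + 2 := ⟨n - 2, by omega⟩
  have hfac : ∀ j : ℕ, ∃ (C : Matrix (Fin (m + 2 - j) → Bool) (Fin L) ℂ)
      (B : Matrix (Fin L) (Fin (m + 2 - j) → Bool) ℂ), ∀ (_ : 1 ≤ j) (hjn : j < m + 2),
        matricize ψ j hjn.le = matricize ψ j hjn.le * C * B := by
    intro j
    by_cases h : 1 ≤ j ∧ j < m + 2
    · obtain ⟨C, B, hCB⟩ := exists_factor_of_rank_le _ L (hrank j h.1 h.2)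
      exact ⟨C, B, fun _ _ => hCB⟩
    · exact ⟨0, 0, fun h1 h2 => absurd ⟨h1, h2⟩ h⟩
  choose C B hCB using hfac
  -- transfer tensors
  let F : ℕ → Bool → Fin L → Fin L → ℂ := fun t b l k =>
    ∑ v : Fin (m + 2 - (t + 1)) → Bool,
      B t l (fun i => if h : (i : ℕ) = 0 then b else v ⟨i - 1, by omega⟩) * C (t + 1) v k
  let A : (Fin (m + 2) → Bool) → ℕ → Fin L → ℂ := fun x t k =>
    if h : t + 1 ≤ m + 2 then
      (matricize ψ (t + 1) h * C (t + 1)) (fun i => x ⟨i, by omega⟩) k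
    else 0
  refine ⟨fun b k => (matricize ψ 1 (by omega) * C 1) (fun _ => b) k,
    fun t => F t, fun b k => B (m + 1) k (fun _ => b), fun x => ?_⟩
  have hA : ∀ t < m, ∀ k, A x (t + 1) k = ∑ l, A x t l * F (t + 1) (x (Fin.ofNat _ (t + 1))) l k := by
    intro t ht k
    have hx : (Fin.ofNat (m + 2) (t + 1)) = ⟨t + 1, by omega⟩ := by
      ext; simp [Fin.ofNat]; omega
    have e1 : t + 1 + 1 ≤ m + 2 := by omega
    have e2 : t + 1 ≤ m + 2 := by omega
    simp only [A, dif_pos e1, dif_pos e2, hx, F]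
    rw [Matrix.mul_apply]
    simp_rw [matricize_split ψ (t + 1) e1 x]
    have hM : ∀ u w, matricize ψ (t + 1) e2 u w =
        ∑ l, (matricize ψ (t + 1) e2 * C (t + 1)) u l * B (t + 1) l w := by
      intro u w
      rw [← Matrix.mul_apply]
      exact congrFun (congrFun (hCB (t + 1) (by omega) (by omega)) u) w
    simp_rw [hM]
    simp_rw [Finset.sum_mul, Finset.mul_sum]
    rw [Finset.sum_comm]
    simp only [mul_assoc]
  have key := sum_paths m (A x) (fun t => F t (x (Fin.ofNat _ t))) hA
    (fun k => B (m + 1) k (fun _ => x ⟨m + 1, by omega⟩))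
  have hlast : ψ x = ∑ k, A x m k * B (m + 1) k (fun _ => x ⟨m + 1, by omega⟩) := by
    have e1 : m + 1 ≤ m + 2 := by omega
    simp only [A, dif_pos e1]
    rw [← Matrix.mul_apply, ← hCB (m + 1) (by omega) (by omega)]
    simp only [matricize, Matrix.of_apply]
    congr 1
    funext i
    split_ifs with h
    · rfl
    · congr 1; ext; simp; omega
  rw [hlast, key]
  refine Finset.sum_congr rfl fun j _ => ?_
  congr 1
  congr 1
  · have e1 : 0 + 1 ≤ m + 2 := by omega
    simp only [A, dif_pos e1]
    have : (fun i : Fin (0 + 1) => x ⟨i, by omega⟩) = fun _ => x ⟨0, by omega⟩ := by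
      funext i; congr 1; ext; simp
    rw [this]
    rfl
  · rw [Fin.prod_univ_succ, Fin.prod_univ_castSucc]
    rw [dif_neg (by simp), dif_neg (by simp), one_mul, mul_one]
    refine Finset.prod_congr rfl fun t _ => ?_
    rw [dif_pos (by simp)]
    have hx : (Fin.ofNat (m + 2) (t + 1)) = t.castSucc.succ := by
      ext; simp [Fin.ofNat]
    simp only [hx]
    rfl
end
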